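/- Let H ∈ ℝ^{p×N}, α₁,…,α_N > 0 with ᾱ = ∑_{i=1}^N α_i, and let V = [v₁,…,v_N] satisfy ‖v_i‖₂² = α_i for all i. Fix an index i and let u_i ∈ ℝ^p satisfy u_iᵀv_i = 0. Let g_i be the i-th column of ∇ℓ(V) = −2(H+V)M(V)^{-1}, and let h_i(u_i) denote the i-th column of ∇²ℓ(V)[u_i e_iᵀ], where e_i is the i-th standard basis vector of ℝ^N. Then ‖(I_p − v_iv_iᵀ/α_i)·h_i(u_i) − (1/α_i)(g_iᵀv_i)·u_i‖₂ ≤ L_i·‖u_i‖₂, where L_i = 2 + 4(‖H‖_F + √ᾱ)² + (2/√α_i)·(‖H‖_F + √ᾱ). -/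

import Mathlib

/-!
Write `W = H + V`, `B = M(V)⁻¹`, and `a = W B e_i`. The `i`-th column of the Euclidean Hessian at
`u e_iᵀ` is `h = -2 B_ii u + 2 (u·a) a + 2 B_ii W B Wᵀ u`, and the `i`-th column of the gradient is
`g = -2 a`.

The matrix `B` is a contraction (`vecNorm_inv_mulVec_le`): if `M y = x` then
`‖y‖² ≤ ‖y‖² + ‖W y‖² = y·x ≤ ‖y‖ ‖x‖`. Hence `|B_ii| ≤ 1`, `‖a‖ ≤ ‖W‖_F` and
`‖W B Wᵀ u‖ ≤ ‖W‖_F² ‖u‖`. Since the tangential projection does not increase the norm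
(`vecNorm_proj_le`), its value at `h` has norm at most `(2 + 4 ‖W‖_F²) ‖u‖`, while the curvature
term has norm at most `(1/α_i) ‖g‖ ‖v_i‖ ‖u‖ ≤ (2/√α_i) ‖W‖_F ‖u‖`. Finally
`‖W‖_F ≤ ‖H‖_F + ‖V‖_F = ‖H‖_F + √ᾱ`.
-/

open Matrix

/-- The Frobenius norm of a real matrix. -/
noncomputable def frob {p N : ℕ} (A : Matrix (Fin p) (Fin N) ℝ) : ℝ :=
  Real.sqrt (∑ x, ∑ i, (A x i) ^ 2)

/-- The Euclidean norm of a vector in `ℝ^p`. -/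
noncomputable def vecNorm {p : ℕ} (x : Fin p → ℝ) : ℝ :=
  Real.sqrt (∑ i, (x i) ^ 2)

/-- `M(V) = I_N + (H+V)ᵀ(H+V)`. -/
noncomputable def Mmat {p N : ℕ} (H V : Matrix (Fin p) (Fin N) ℝ) :
    Matrix (Fin N) (Fin N) ℝ :=
  1 + (H + V)ᵀ * (H + V)

/-- The Euclidean gradient `∇ℓ(V) = −2(H+V)M(V)⁻¹` of `ℓ`. -/
noncomputable def egrad {p N : ℕ} (H V : Matrix (Fin p) (Fin N) ℝ) :
    Matrix (Fin p) (Fin N) ℝ :=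
  (-2 : ℝ) • ((H + V) * (Mmat H V)⁻¹)

/-- The Euclidean Hessian of `ℓ` at `V` applied to `U`. -/
noncomputable def hess {p N : ℕ} (H V U : Matrix (Fin p) (Fin N) ℝ) :
    Matrix (Fin p) (Fin N) ℝ :=
  (-2 : ℝ) • (U * (Mmat H V)⁻¹)
    + (2 : ℝ) • ((H + V) * (Mmat H V)⁻¹ * (Uᵀ * (H + V) + (H + V)ᵀ * U) * (Mmat H V)⁻¹)

lemma vecNorm_eq {p : ℕ} (x : Fin p → ℝ) : vecNorm x = ‖WithLp.toLp 2 x‖ := by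
  simp [vecNorm, EuclideanSpace.norm_eq]

lemma vecNorm_nonneg {p : ℕ} (x : Fin p → ℝ) : 0 ≤ vecNorm x := Real.sqrt_nonneg _

lemma frob_nonneg {p N : ℕ} (A : Matrix (Fin p) (Fin N) ℝ) : 0 ≤ frob A := Real.sqrt_nonneg _

lemma vecNorm_add_le {p : ℕ} (x y : Fin p → ℝ) : vecNorm (x + y) ≤ vecNorm x + vecNorm y := by
  simp only [vecNorm_eq, WithLp.toLp_add]
  exact norm_add_le _ _

lemma vecNorm_sub_le {p : ℕ} (x y : Fin p → ℝ) : vecNorm (x - y) ≤ vecNorm x + vecNorm y := by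
  simp only [vecNorm_eq, WithLp.toLp_sub]
  exact norm_sub_le _ _

lemma vecNorm_smul {p : ℕ} (c : ℝ) (x : Fin p → ℝ) : vecNorm (c • x) = |c| * vecNorm x := by
  simp only [vecNorm_eq, WithLp.toLp_smul, norm_smul, Real.norm_eq_abs]

lemma vecNorm_sq {p : ℕ} (x : Fin p → ℝ) : vecNorm x ^ 2 = x ⬝ᵥ x := by
  rw [vecNorm, Real.sq_sqrt (Finset.sum_nonneg fun _ _ => sq_nonneg _)]
  simp [dotProduct, sq]

lemma abs_dotProduct_le {p : ℕ} (x y : Fin p → ℝ) : |x ⬝ᵥ y| ≤ vecNorm x * vecNorm y := by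
  refine abs_le_of_sq_le_sq ?_ (mul_nonneg (vecNorm_nonneg _) (vecNorm_nonneg _))
  rw [mul_pow, vecNorm_sq, vecNorm_sq]
  simpa [dotProduct, sq] using Finset.sum_mul_sq_le_sq_mul_sq Finset.univ x y

lemma vecNorm_single {N : ℕ} (i : Fin N) : vecNorm (Pi.single i (1 : ℝ)) = 1 := by
  have h := vecNorm_sq (Pi.single i (1 : ℝ))
  rw [single_dotProduct, Pi.single_eq_same, one_mul] at h
  exact (pow_eq_one_iff_of_nonneg (vecNorm_nonneg _) two_ne_zero).1 h

lemma frob_add_le {p N : ℕ} (A B : Matrix (Fin p) (Fin N) ℝ) :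
    frob (A + B) ≤ frob A + frob B := by
  -- The Frobenius norm is the Euclidean norm on the product index set.
  have key : ∀ C : Matrix (Fin p) (Fin N) ℝ,
      frob C = ‖WithLp.toLp 2 (fun q : Fin p × Fin N => C q.1 q.2)‖ := fun C => by
    simp [frob, EuclideanSpace.norm_eq, Fintype.sum_prod_type]
  simp only [key]
  exact norm_add_le (WithLp.toLp 2 (fun q : Fin p × Fin N => A q.1 q.2)) (WithLp.toLp 2 _)

lemma frob_transpose {p N : ℕ} (A : Matrix (Fin p) (Fin N) ℝ) : frob Aᵀ = frob A := by
  simp only [frob, transpose_apply]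
  rw [Finset.sum_comm]

lemma vecNorm_mulVec_le {p N : ℕ} (A : Matrix (Fin p) (Fin N) ℝ) (x : Fin N → ℝ) :
    vecNorm (A *ᵥ x) ≤ frob A * vecNorm x := by
  rw [frob, vecNorm, vecNorm, ← Real.sqrt_mul (by positivity), Finset.sum_mul]
  refine Real.sqrt_le_sqrt (Finset.sum_le_sum fun k _ => ?_)
  exact Finset.sum_mul_sq_le_sq_mul_sq Finset.univ (A k) x

lemma isUnit_Mmat {p N : ℕ} (H V : Matrix (Fin p) (Fin N) ℝ) : IsUnit (Mmat H V).det := by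
  have h : (Mmat H V).PosDef := by
    have := PosDef.one.add_posSemidef (posSemidef_conjTranspose_mul_self (H + V))
    simpa [Mmat, conjTranspose_eq_transpose_of_trivial] using this
  exact h.det_pos.ne'.isUnit

/-- `M(V)⁻¹` is a contraction, because `y · M(V) y = ‖y‖² + ‖(H+V) y‖²`. -/
lemma vecNorm_inv_mulVec_le {p N : ℕ} (H V : Matrix (Fin p) (Fin N) ℝ) (x : Fin N → ℝ) :
    vecNorm ((Mmat H V)⁻¹ *ᵥ x) ≤ vecNorm x := by
  set y := (Mmat H V)⁻¹ *ᵥ x with hy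
  have hx : Mmat H V *ᵥ y = x := by
    rw [hy, mulVec_mulVec, mul_nonsing_inv _ (isUnit_Mmat H V), one_mulVec]
  have h1 : y ⬝ᵥ x = vecNorm y ^ 2 + vecNorm ((H + V) *ᵥ y) ^ 2 := by
    rw [← hx, vecNorm_sq, vecNorm_sq, Mmat, add_mulVec, one_mulVec, dotProduct_add,
      ← mulVec_mulVec, dotProduct_mulVec y (H + V)ᵀ, vecMul_transpose]
  have h2 := (le_abs_self _).trans (abs_dotProduct_le y x)
  by_contra! hlt
  nlinarith [vecNorm_nonneg x, vecNorm_nonneg y, sq_nonneg (vecNorm ((H + V) *ᵥ y))]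

/-- The orthogonal projection onto the complement of `v` does not increase the norm. -/
lemma vecNorm_proj_le {p : ℕ} (v h : Fin p → ℝ) {a : ℝ} (ha : 0 < a) (hv : v ⬝ᵥ v = a) :
    vecNorm (h - (a⁻¹ * (v ⬝ᵥ h)) • v) ≤ vecNorm h := by
  refine abs_le_of_sq_le_sq' ?_ (vecNorm_nonneg h) |>.2
  have : vecNorm (h - (a⁻¹ * (v ⬝ᵥ h)) • v) ^ 2 = vecNorm h ^ 2 - a⁻¹ * (v ⬝ᵥ h) ^ 2 := by
    rw [vecNorm_sq, vecNorm_sq]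
    simp only [sub_dotProduct, dotProduct_sub, smul_dotProduct, dotProduct_smul, smul_eq_mul, hv,
      dotProduct_comm h v]
    field_simp
    ring
  rw [this]
  have : 0 ≤ a⁻¹ * (v ⬝ᵥ h) ^ 2 := by positivity
  linarith

/-- The `i`-th column of `∇²ℓ(V)[u e_iᵀ]`, in terms of `B = M(V)⁻¹` and `a = (H+V) B e_i`. -/
lemma hess_col {p N : ℕ} (H V : Matrix (Fin p) (Fin N) ℝ) (i : Fin N) (u : Fin p → ℝ) :
    (fun x => hess H V (vecMulVec u (Pi.single i 1)) x i)
      = (-2 * (Mmat H V)⁻¹ i i) • u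
        + ((2 * (u ⬝ᵥ ((H + V) *ᵥ ((Mmat H V)⁻¹ *ᵥ Pi.single i 1)))) •
            ((H + V) *ᵥ ((Mmat H V)⁻¹ *ᵥ Pi.single i 1))
          + (2 * (Mmat H V)⁻¹ i i) • ((H + V) *ᵥ ((Mmat H V)⁻¹ *ᵥ ((H + V)ᵀ *ᵥ u)))) := by
  have hcol : (fun x => hess H V (vecMulVec u (Pi.single i 1)) x i)
      = hess H V (vecMulVec u (Pi.single i 1)) *ᵥ Pi.single i 1 := by
    ext x; simp
  have hB : (Pi.single i 1 : Fin N → ℝ) ⬝ᵥ ((Mmat H V)⁻¹ *ᵥ Pi.single i 1)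
      = (Mmat H V)⁻¹ i i := by simp
  rw [hcol, hess]
  simp only [add_mulVec, smul_mulVec, ← mulVec_mulVec, transpose_vecMulVec, vecMulVec_mulVec,
    mulVec_add, mulVec_smul, hB, smul_add, smul_smul, op_smul_eq_smul, dotProduct_add]
  module

lemma egrad_col {p N : ℕ} (H V : Matrix (Fin p) (Fin N) ℝ) (i : Fin N) :
    (fun x => egrad H V x i)
      = (-2 : ℝ) • ((H + V) *ᵥ ((Mmat H V)⁻¹ *ᵥ Pi.single i 1)) := by
  rw [mulVec_mulVec]
  ext x
  simp [egrad]

/-- Block Riemannian Hessian bound: with `v_i` the `i`-th column of `V` on the sphere,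
`u_i` tangent at `v_i`, `g_i` the `i`-th column of `∇ℓ(V)` and `h_i(u_i)` the `i`-th
column of `∇²ℓ(V)[u_i e_iᵀ]`, one has
`‖(I_p − v_iv_iᵀ/α_i)h_i(u_i) − (1/α_i)(g_iᵀv_i)u_i‖₂ ≤ L_i‖u_i‖₂`, where
`L_i = 2 + 4(‖H‖_F + √ᾱ)² + (2/√α_i)(‖H‖_F + √ᾱ)`. -/
theorem block_rhess_bound
    {p N : ℕ} (H V : Matrix (Fin p) (Fin N) ℝ) (α : Fin N → ℝ)
    (hα : ∀ i, 0 < α i) (hV : ∀ i, ∑ x, (V x i) ^ 2 = α i)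
    (i : Fin N) (u : Fin p → ℝ) (hu : u ⬝ᵥ (fun x => V x i) = 0) :
    vecNorm (fun x =>
        (hess H V (vecMulVec u (Pi.single i 1)) x i
          - (α i)⁻¹ * (∑ y, V y i * hess H V (vecMulVec u (Pi.single i 1)) y i) * V x i)
        - (α i)⁻¹ * (∑ y, egrad H V y i * V y i) * u x)
      ≤ (2 + 4 * (frob H + Real.sqrt (∑ j, α j)) ^ 2
          + 2 / Real.sqrt (α i) * (frob H + Real.sqrt (∑ j, α j))) * vecNorm u := by
  have hv : (fun x => V x i) ⬝ᵥ (fun x => V x i) = α i := by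
    simpa [dotProduct, sq] using hV i
  have hvn : vecNorm (fun x => V x i) = Real.sqrt (α i) := by rw [vecNorm, hV i]
  have hW : frob (H + V) ≤ frob H + Real.sqrt (∑ j, α j) := by
    have : frob V = Real.sqrt (∑ j, α j) := by
      rw [frob, Finset.sum_comm]
      simp only [hV]
    exact this ▸ frob_add_le H V
  set F := frob H + Real.sqrt (∑ j, α j)
  have hw0 := frob_nonneg (H + V)
  have hu0 := vecNorm_nonneg u
  have hF0 : 0 ≤ F := hw0.trans hW
  have hcol := hess_col H V i u
  have hg := egrad_col H V i
  set v : Fin p → ℝ := fun x => V x i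
  set h : Fin p → ℝ := fun x => hess H V (vecMulVec u (Pi.single i 1)) x i
  set g : Fin p → ℝ := fun x => egrad H V x i
  have hbe := vecNorm_inv_mulVec_le H V (Pi.single i 1)
  rw [vecNorm_single] at hbe
  have hB : |(Mmat H V)⁻¹ i i| ≤ 1 := by
    have := abs_dotProduct_le (Pi.single i 1) ((Mmat H V)⁻¹ *ᵥ Pi.single i 1)
    rw [vecNorm_single, one_mul] at this
    simpa using this.trans hbe
  have ha : vecNorm ((H + V) *ᵥ ((Mmat H V)⁻¹ *ᵥ Pi.single i 1)) ≤ F :=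
    (vecNorm_mulVec_le _ _).trans ((mul_le_of_le_one_right hw0 hbe).trans hW)
  have hG : vecNorm ((H + V) *ᵥ ((Mmat H V)⁻¹ *ᵥ ((H + V)ᵀ *ᵥ u))) ≤ F * (F * vecNorm u) := by
    have h1 := vecNorm_mulVec_le (H + V)ᵀ u
    rw [frob_transpose] at h1
    calc _ ≤ frob (H + V) * vecNorm ((Mmat H V)⁻¹ *ᵥ ((H + V)ᵀ *ᵥ u)) := vecNorm_mulVec_le _ _
      _ ≤ frob (H + V) * (frob (H + V) * vecNorm u) := by
        gcongr
        exact (vecNorm_inv_mulVec_le H V _).trans h1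
      _ ≤ F * (F * vecNorm u) := by gcongr
  set a := (H + V) *ᵥ ((Mmat H V)⁻¹ *ᵥ Pi.single i 1)
  have ha0 := vecNorm_nonneg a
  have hh : vecNorm h ≤ (2 + 4 * F ^ 2) * vecNorm u := by
    rw [hcol]
    refine (vecNorm_add_le _ _).trans ((add_le_add_right (vecNorm_add_le _ _) _).trans ?_)
    simp only [vecNorm_smul, abs_mul, abs_neg, abs_two]
    have h1 : 2 * |(Mmat H V)⁻¹ i i| * vecNorm u ≤ 2 * 1 * vecNorm u := by gcongr
    have h2 : 2 * |u ⬝ᵥ a| * vecNorm a ≤ 2 * (vecNorm u * F) * F := by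
      gcongr
      exact (abs_dotProduct_le u a).trans (by gcongr)
    have h3 : 2 * |(Mmat H V)⁻¹ i i| *
        vecNorm ((H + V) *ᵥ ((Mmat H V)⁻¹ *ᵥ ((H + V)ᵀ *ᵥ u)))
        ≤ 2 * 1 * (F * (F * vecNorm u)) := by
      gcongr
      exact vecNorm_nonneg _
    linarith
  have hs : 0 < Real.sqrt (α i) := Real.sqrt_pos.2 (hα i)
  have hc : |(α i)⁻¹ * (g ⬝ᵥ v)| ≤ 2 / Real.sqrt (α i) * F := by
    have h1 : |g ⬝ᵥ v| ≤ 2 * F * Real.sqrt (α i) := by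
      refine (abs_dotProduct_le g v).trans ?_
      rw [hvn, hg, vecNorm_smul, abs_neg, abs_two]
      gcongr
    have hsq : (α i)⁻¹ = (Real.sqrt (α i))⁻¹ * (Real.sqrt (α i))⁻¹ := by
      rw [← mul_inv, Real.mul_self_sqrt (hα i).le]
    rw [abs_mul, abs_of_pos (inv_pos.2 (hα i))]
    calc (α i)⁻¹ * |g ⬝ᵥ v| ≤ (α i)⁻¹ * (2 * F * Real.sqrt (α i)) :=
          mul_le_mul_of_nonneg_left h1 (inv_pos.2 (hα i)).le
      _ = 2 / Real.sqrt (α i) * F := by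
          rw [hsq]
          field_simp
  calc vecNorm _ = vecNorm ((h - ((α i)⁻¹ * (v ⬝ᵥ h)) • v) - ((α i)⁻¹ * (g ⬝ᵥ v)) • u) := rfl
    _ ≤ vecNorm h + |(α i)⁻¹ * (g ⬝ᵥ v)| * vecNorm u := by
      refine (vecNorm_sub_le _ _).trans ?_
      rw [vecNorm_smul]
      gcongr
      exact vecNorm_proj_le v h (hα i) hv
    _ ≤ (2 + 4 * F ^ 2) * vecNorm u + 2 / Real.sqrt (α i) * F * vecNorm u := by gcongr
    _ = _ := by ring
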